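/- Let τ : ℝ² → ℝ be a smooth function with τ(x,y) > 0 for all (x,y), and suppose τ satisfies the bilinear Boussinesq equation τ∂_x⁴τ − 4(∂_xτ)(∂_x³τ) + 3(∂_x²τ)² − τ∂_x²τ + (∂_xτ)² − τ∂_y²τ + (∂_yτ)² = 0 at every point. Then u := 2∂_x² ln τ satisfies the Boussinesq equation ∂_x²(∂_x²u − u + 3u²) − ∂_y²u = 0 at every point of ℝ². -/

import Mathlib

/-!
Put `φ = ln τ`, so that `τ = exp φ`. Dividing the bilinear equation by `τ²` gives the scalar equation
`φₓₓₓₓ + 6 φₓₓ² − φₓₓ = φ_yy` (the first derivatives of `φ` cancel), which holds on all of `ℝ²`.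
With `u = 2 φₓₓ` this reads `uₓₓ − u + 3u² = 2 φ_yy`; applying `∂ₓ²` and using that the partial
derivatives commute (`pdx_pdy_comm`), the right-hand side becomes `∂_y² (2 φₓₓ) = u_yy`.
-/

/-- Partial derivative in the first (`x`) variable of a function `ℝ → ℝ → ℝ`. -/
noncomputable def pdx (f : ℝ → ℝ → ℝ) : ℝ → ℝ → ℝ := fun x y => deriv (fun t => f t y) x

/-- Partial derivative in the second (`y`) variable of a function `ℝ → ℝ → ℝ`. -/
noncomputable def pdy (f : ℝ → ℝ → ℝ) : ℝ → ℝ → ℝ := fun x y => deriv (fun t => f x t) y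

/-- Joint smoothness of a curried function of two real variables. -/
def Smooth2 (f : ℝ → ℝ → ℝ) : Prop := ContDiff ℝ (⊤ : ℕ∞) (fun p : ℝ × ℝ => f p.1 p.2)

namespace Smooth2

variable {f g : ℝ → ℝ → ℝ}

theorem differentiableAt (hf : Smooth2 f) (p : ℝ × ℝ) :
    DifferentiableAt ℝ (fun p : ℝ × ℝ => f p.1 p.2) p :=
  (ContDiff.differentiable hf (by simp)) p

theorem hasDerivAt_x (hf : Smooth2 f) (x y : ℝ) :
    HasDerivAt (fun t => f t y) (fderiv ℝ (fun p : ℝ × ℝ => f p.1 p.2) (x, y) (1, 0)) x :=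
  HasFDerivAt.comp_hasDerivAt (f := fun t => (t, y)) x
    (hf.differentiableAt (x, y)).hasFDerivAt
    ((hasDerivAt_id x).prodMk (hasDerivAt_const x y))

theorem hasDerivAt_y (hf : Smooth2 f) (x y : ℝ) :
    HasDerivAt (fun t => f x t) (fderiv ℝ (fun p : ℝ × ℝ => f p.1 p.2) (x, y) (0, 1)) y :=
  HasFDerivAt.comp_hasDerivAt (f := fun t => (x, t)) y
    (hf.differentiableAt (x, y)).hasFDerivAt
    ((hasDerivAt_const y x).prodMk (hasDerivAt_id y))

theorem pdx_eq (hf : Smooth2 f) :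
    pdx f = fun x y => fderiv ℝ (fun p : ℝ × ℝ => f p.1 p.2) (x, y) (1, 0) := by
  funext x y
  exact (hf.hasDerivAt_x x y).deriv

theorem pdy_eq (hf : Smooth2 f) :
    pdy f = fun x y => fderiv ℝ (fun p : ℝ × ℝ => f p.1 p.2) (x, y) (0, 1) := by
  funext x y
  exact (hf.hasDerivAt_y x y).deriv

theorem fderiv_apply (hf : Smooth2 f) (v : ℝ × ℝ) :
    Smooth2 (fun x y => fderiv ℝ (fun p : ℝ × ℝ => f p.1 p.2) (x, y) v) :=
  (ContDiff.fderiv_right (m := (⊤ : ℕ∞)) hf (by simp)).clm_apply contDiff_const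

theorem pdx (hf : Smooth2 f) : Smooth2 (pdx f) := by
  rw [hf.pdx_eq]; exact hf.fderiv_apply _

theorem pdy (hf : Smooth2 f) : Smooth2 (pdy f) := by
  rw [hf.pdy_eq]; exact hf.fderiv_apply _

theorem hasDerivAt_pdx (hf : Smooth2 f) (x y : ℝ) :
    HasDerivAt (fun t => f t y) (_root_.pdx f x y) x :=
  (hf.hasDerivAt_x x y).differentiableAt.hasDerivAt

theorem hasDerivAt_pdy (hf : Smooth2 f) (x y : ℝ) :
    HasDerivAt (fun t => f x t) (_root_.pdy f x y) y :=
  (hf.hasDerivAt_y x y).differentiableAt.hasDerivAt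

theorem add (hf : Smooth2 f) (hg : Smooth2 g) : Smooth2 (fun x y => f x y + g x y) :=
  ContDiff.add hf hg

theorem mul (hf : Smooth2 f) (hg : Smooth2 g) : Smooth2 (fun x y => f x y * g x y) :=
  ContDiff.mul hf hg

theorem log (hf : Smooth2 f) (hpos : ∀ x y, 0 < f x y) :
    Smooth2 (fun x y => Real.log (f x y)) :=
  ContDiff.log hf fun p => (hpos p.1 p.2).ne'

end Smooth2

/-- Symmetry of the second derivative, in curried form. -/
theorem pdx_pdy_comm {f : ℝ → ℝ → ℝ} (hf : Smooth2 f) : pdx (pdy f) = pdy (pdx f) := by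
  have hd : ∀ p : ℝ × ℝ, DifferentiableAt ℝ (fderiv ℝ (fun p : ℝ × ℝ => f p.1 p.2)) p := fun p =>
    (ContDiff.fderiv_right (m := (⊤ : ℕ∞)) hf (by simp)).differentiable (by simp) p
  have key : ∀ (p v w : ℝ × ℝ),
      fderiv ℝ (fun q : ℝ × ℝ => fderiv ℝ (fun p : ℝ × ℝ => f p.1 p.2) (q.1, q.2) v) p w
        = fderiv ℝ (fderiv ℝ (fun p : ℝ × ℝ => f p.1 p.2)) p w v := by
    intro p v w
    rw [fderiv_clm_apply (hd p) (differentiableAt_const v)]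
    simp
  have hsymm : ∀ p : ℝ × ℝ, IsSymmSndFDerivAt ℝ (fun p : ℝ × ℝ => f p.1 p.2) p := fun p =>
    (ContDiff.contDiffAt hf).isSymmSndFDerivAt (by
      simp only [minSmoothness_of_isRCLikeNormedField]
      exact WithTop.coe_le_coe.2 le_top)
  rw [hf.pdy.pdx_eq, hf.pdx.pdy_eq, hf.pdy_eq, hf.pdx_eq]
  funext x y
  rw [key, key]
  exact hsymm (x, y) _ _

theorem pdx_const_mul (c : ℝ) (f : ℝ → ℝ → ℝ) :
    pdx (fun x y => c * f x y) = fun x y => c * pdx f x y := by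
  funext x y
  exact deriv_const_mul_field c

theorem pdy_const_mul (c : ℝ) (f : ℝ → ℝ → ℝ) :
    pdy (fun x y => c * f x y) = fun x y => c * pdy f x y := by
  funext x y
  exact deriv_const_mul_field c

theorem pdx_add {f g : ℝ → ℝ → ℝ} (hf : Smooth2 f) (hg : Smooth2 g) :
    pdx (fun x y => f x y + g x y) = fun x y => pdx f x y + pdx g x y := by
  funext x y
  exact ((hf.hasDerivAt_pdx x y).add (hg.hasDerivAt_pdx x y)).deriv

theorem pdx_mul {f g : ℝ → ℝ → ℝ} (hf : Smooth2 f) (hg : Smooth2 g) :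
    pdx (fun x y => f x y * g x y) = fun x y => pdx f x y * g x y + f x y * pdx g x y := by
  funext x y
  exact ((hf.hasDerivAt_pdx x y).mul (hg.hasDerivAt_pdx x y)).deriv

theorem pdy_mul {f g : ℝ → ℝ → ℝ} (hf : Smooth2 f) (hg : Smooth2 g) :
    pdy (fun x y => f x y * g x y) = fun x y => pdy f x y * g x y + f x y * pdy g x y := by
  funext x y
  exact ((hf.hasDerivAt_pdy x y).mul (hg.hasDerivAt_pdy x y)).deriv

section LogDerivatives

variable {τ : ℝ → ℝ → ℝ}

theorem pdx_eq_mul_log (hτ : Smooth2 τ) (hpos : ∀ x y, 0 < τ x y) :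
    pdx τ = fun x y => τ x y * pdx (fun c d => Real.log (τ c d)) x y := by
  funext x y
  have h := ((hτ.hasDerivAt_pdx x y).log (hpos x y).ne').deriv
  change _ = τ x y * deriv (fun t => Real.log (τ t y)) x
  rw [h]
  field_simp [(hpos x y).ne']

theorem pdy_eq_mul_log (hτ : Smooth2 τ) (hpos : ∀ x y, 0 < τ x y) :
    pdy τ = fun x y => τ x y * pdy (fun c d => Real.log (τ c d)) x y := by
  funext x y
  have h := ((hτ.hasDerivAt_pdy x y).log (hpos x y).ne').deriv
  change _ = τ x y * deriv (fun t => Real.log (τ x t)) y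
  rw [h]
  field_simp [(hpos x y).ne']

/-- The bilinear equation divided by `τ²`, as an equation for `φ = ln τ`. -/
theorem log_equation (hτ : Smooth2 τ) (hpos : ∀ x y, 0 < τ x y)
    (hbil : ∀ x y : ℝ,
      τ x y * pdx (pdx (pdx (pdx τ))) x y
        - 4 * pdx τ x y * pdx (pdx (pdx τ)) x y
        + 3 * (pdx (pdx τ) x y)^2
        - τ x y * pdx (pdx τ) x y
        + (pdx τ x y)^2
        - τ x y * pdy (pdy τ) x y
        + (pdy τ x y)^2 = 0)
    (φ : ℝ → ℝ → ℝ) (hφ : φ = fun c d => Real.log (τ c d)) (x y : ℝ) :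
    pdx (pdx (pdx (pdx φ))) x y + 6 * (pdx (pdx φ) x y)^2 - pdx (pdx φ) x y
      = pdy (pdy φ) x y := by
  have sφ : Smooth2 φ := hφ ▸ hτ.log hpos
  have e1 : pdx τ = fun x y => τ x y * pdx φ x y := hφ ▸ pdx_eq_mul_log hτ hpos
  have f1 : pdy τ = fun x y => τ x y * pdy φ x y := hφ ▸ pdy_eq_mul_log hτ hpos
  -- Differentiating `τ g` gives `τ (φₓ g + gₓ)`, so each `∂ₓᵏ τ` is `τ` times a polynomial in the
  -- derivatives of `φ`.
  have step : ∀ g : ℝ → ℝ → ℝ, Smooth2 g →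
      pdx (fun x y => τ x y * g x y) = fun x y => τ x y * (pdx φ x y * g x y + pdx g x y) := by
    intro g hg
    rw [pdx_mul hτ hg, e1]
    funext x y
    ring
  have s1 := sφ.pdx
  have s2 := s1.pdx
  have s3 := s2.pdx
  have q2 := (s1.mul s1).add s2
  have e2 := step _ s1
  have e3 := step _ q2
  have e4 := step _ ((s1.mul q2).add q2.pdx)
  have f2 : pdy (fun x y => τ x y * pdy φ x y)
      = fun x y => τ x y * (pdy φ x y * pdy φ x y + pdy (pdy φ) x y) := by
    rw [pdy_mul hτ sφ.pdy, f1]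
    funext x y
    ring
  have d2 : pdx (fun x y => pdx φ x y * pdx φ x y + pdx (pdx φ) x y)
      = fun x y => (pdx (pdx φ) x y * pdx φ x y + pdx φ x y * pdx (pdx φ) x y)
        + pdx (pdx (pdx φ)) x y := by
    rw [pdx_add (s1.mul s1) s2, pdx_mul s1 s1]
  have s21 := s2.mul s1
  have s12 := s1.mul s2
  have h := hbil x y
  rw [e1, f1, e2, f2, e3, e4, pdx_add (s1.mul q2) q2.pdx, pdx_mul s1 q2, d2,
    pdx_add (s21.add s12) s3, pdx_add s21 s12, pdx_mul s2 s1, pdx_mul s1 s2] at h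
  have hne : (τ x y)^2 ≠ 0 := pow_ne_zero 2 (hpos x y).ne'
  apply mul_left_cancel₀ hne
  linear_combination h

end LogDerivatives

/-- if `τ` is a smooth positive solution of the bilinear Boussinesq equation
then `u = 2∂ₓ² ln τ` satisfies the Boussinesq equation `∂ₓ²(∂ₓ²u − u + 3u²) − ∂_y²u = 0`
at every point of `ℝ²`. -/
theorem bilinear_to_boussinesq (τ : ℝ → ℝ → ℝ)
    (hτ : ContDiff ℝ (⊤ : ℕ∞) (fun p : ℝ × ℝ => τ p.1 p.2))
    (hpos : ∀ x y : ℝ, 0 < τ x y)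
    (hbil : ∀ x y : ℝ,
      τ x y * pdx (pdx (pdx (pdx τ))) x y
        - 4 * pdx τ x y * pdx (pdx (pdx τ)) x y
        + 3 * (pdx (pdx τ) x y)^2
        - τ x y * pdx (pdx τ) x y
        + (pdx τ x y)^2
        - τ x y * pdy (pdy τ) x y
        + (pdy τ x y)^2 = 0) :
    ∀ x y : ℝ,
      pdx (pdx (fun s t =>
        pdx (pdx (fun a b => 2 * pdx (pdx (fun c d => Real.log (τ c d))) a b)) s t
          - (2 * pdx (pdx (fun c d => Real.log (τ c d))) s t)
          + 3 * (2 * pdx (pdx (fun c d => Real.log (τ c d))) s t)^2)) x y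
        - pdy (pdy (fun a b => 2 * pdx (pdx (fun c d => Real.log (τ c d))) a b)) x y = 0 := by
  have sφ : Smooth2 (fun c d => Real.log (τ c d)) := Smooth2.log hτ hpos
  have key := log_equation hτ hpos hbil _ rfl
  generalize (fun c d => Real.log (τ c d)) = φ at sφ key ⊢
  have inner : (fun s t => pdx (pdx (fun a b => 2 * pdx (pdx φ) a b)) s t
        - 2 * pdx (pdx φ) s t + 3 * (2 * pdx (pdx φ) s t)^2)
      = fun s t => 2 * pdy (pdy φ) s t := by
    funext s t
    simp only [pdx_const_mul]
    linear_combination 2 * key s t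
  have comm : pdx (pdx (pdy (pdy φ))) = pdy (pdy (pdx (pdx φ))) := by
    rw [pdx_pdy_comm sφ.pdy, pdx_pdy_comm sφ, pdx_pdy_comm sφ.pdx.pdy, pdx_pdy_comm sφ.pdx]
  intro x y
  rw [inner]
  simp only [pdx_const_mul, pdy_const_mul, comm, sub_self]
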